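/- Define ⟨f,g⟩_Δ := (1/π)∫_{B^d} Δ[(1−‖x‖²)f(x)]·Δ[(1−‖x‖²)g(x)] dx on polynomials in d variables. Define Q_{0,ν}^n(x) := Y_ν^n(x) and, for 1 ≤ j ≤ n/2, Q_{j,ν}^n(x) := (1−‖x‖²)·P_{j−1}^{(2, n−2j+(d−2)/2)}(2‖x‖²−1)·Y_ν^{n−2j}(x). Then the family {Q_{j,ν}^n} is mutually orthogonal with respect to ⟨·,·⟩_Δ: for any two distinct index triples (n,j,ν) ≠ (m,l,μ) with 0 ≤ 2j ≤ n, 1 ≤ ν ≤ σ_{n−2j}, 0 ≤ 2l ≤ m, 1 ≤ μ ≤ σ_{m−2l}, one has ⟨Q_{j,ν}^n, Q_{l,μ}^m⟩_Δ = 0. -/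

import Mathlib

open MeasureTheory Metric MvPolynomial RealInnerProductSpace

noncomputable section

/-- Generalized binomial coefficient `C(z, k)` for real `z`. -/
def genBinom (z : ℝ) (k : ℕ) : ℝ := (∏ i ∈ Finset.range k, (z - i)) / (Nat.factorial k)

/-- The Jacobi polynomial `P_n^{(a,b)}`, normalized so that `P_n^{(a,b)}(1) = C(n+a, n)`. -/
def jacobiPoly (n : ℕ) (a b : ℝ) : Polynomial ℝ :=
  ∑ s ∈ Finset.range (n + 1),
    Polynomial.C (genBinom ((n : ℝ) + a) (n - s) * genBinom ((n : ℝ) + b) s) *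
      (Polynomial.C (2⁻¹) * (Polynomial.X - 1)) ^ s *
      (Polynomial.C (2⁻¹) * (Polynomial.X + 1)) ^ (n - s)

/-- The Jacobi polynomial as a real function. -/
def jacobiR (n : ℕ) (a b x : ℝ) : ℝ := (jacobiPoly n a b).eval x

/-- The Laplace operator on polynomials in `d` variables. -/
def mvLaplacian {d : ℕ} (p : MvPolynomial (Fin d) ℝ) : MvPolynomial (Fin d) ℝ :=
  ∑ i : Fin d, pderiv i (pderiv i p)

/-- The polynomial `‖x‖² = x₁² + ⋯ + x_d²`. -/
def sumSq (d : ℕ) : MvPolynomial (Fin d) ℝ := ∑ i : Fin d, X i ^ 2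

/-- `σ_m`, the dimension of the space of spherical harmonics of degree `m` in `d` variables. -/
def sigmaDim (d m : ℕ) : ℕ := (m + d - 1).choose (d - 1) - (m + d - 3).choose (d - 1)

/-- The surface area `ω_d = 2 π^{d/2} / Γ(d/2)` of the unit sphere `S^{d-1}`. -/
def omegaD (d : ℕ) : ℝ := 2 * Real.pi ^ ((d : ℝ) / 2) / Real.Gamma ((d : ℝ) / 2)

/-- Euclidean space `ℝ^d`. -/
abbrev Edim (d : ℕ) := EuclideanSpace ℝ (Fin d)

/-- Evaluation of a polynomial in `d` variables at a point of `ℝ^d`. -/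
def pEval {d : ℕ} (p : MvPolynomial (Fin d) ℝ) (x : Edim d) : ℝ := eval (fun i => x i) p

/-- The surface measure `dω` on the unit sphere `S^{d-1}`. -/
def sphMeasure (d : ℕ) : Measure (sphere (0 : Edim d) 1) :=
  (volume : Measure (Edim d)).toSphere

/-- The Sobolev inner product `⟨f,g⟩_I`. -/
def innerI (d : ℕ) (lam : ℝ) (f g : Edim d → ℝ) : ℝ :=
  (lam / omegaD d) * ∫ x in closedBall (0 : Edim d) 1, ⟪gradient f x, gradient g x⟫ +
    (1 / omegaD d) * ∫ y : sphere (0 : Edim d) 1, f y * g y ∂(sphMeasure d)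

/-- The Sobolev inner product `⟨f,g⟩_II`. -/
def innerII (d : ℕ) (lam : ℝ) (f g : Edim d → ℝ) : ℝ :=
  (lam / omegaD d) * ∫ x in closedBall (0 : Edim d) 1, ⟪gradient f x, gradient g x⟫ +
    f 0 * g 0

/-- The polynomials `U_{j,ν}^n`. -/
def Upoly (d : ℕ) (Y : (m : ℕ) → Fin (sigmaDim d m) → MvPolynomial (Fin d) ℝ)
    (n j : ℕ) (ν : Fin (sigmaDim d (n - 2 * j))) : MvPolynomial (Fin d) ℝ :=
  if j = 0 then Y (n - 2 * j) ν
  else (1 - sumSq d) *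
      Polynomial.aeval (2 * sumSq d - 1)
        (jacobiPoly (j - 1) 1 ((n : ℝ) - 2 * (j : ℝ) + ((d : ℝ) - 2) / 2)) *
      Y (n - 2 * j) ν


/-- The inner product `⟨f,g⟩_Δ = (1/π) ∫_{B^d} Δ[(1-‖x‖²)f(x)] Δ[(1-‖x‖²)g(x)] dx`. -/
def innerDelta (d : ℕ) (f g : MvPolynomial (Fin d) ℝ) : ℝ :=
  (1 / Real.pi) * ∫ x in closedBall (0 : Edim d) 1,
    pEval (mvLaplacian ((1 - sumSq d) * f)) x * pEval (mvLaplacian ((1 - sumSq d) * g)) x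

/-- The polynomials `Q_{j,ν}^n`: `Q_{0,ν}^n = Y_ν^n` and, for `j ≥ 1`,
`Q_{j,ν}^n(x) = (1-‖x‖²) P_{j-1}^{(2, n-2j+(d-2)/2)}(2‖x‖²-1) Y_ν^{n-2j}(x)`. -/
def Qpoly (d : ℕ) (Y : (m : ℕ) → Fin (sigmaDim d m) → MvPolynomial (Fin d) ℝ)
    (n j : ℕ) (ν : Fin (sigmaDim d (n - 2 * j))) : MvPolynomial (Fin d) ℝ :=
  if j = 0 then Y (n - 2 * j) ν
  else (1 - sumSq d) *
      Polynomial.aeval (2 * sumSq d - 1)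
        (jacobiPoly (j - 1) 2 ((n : ℝ) - 2 * (j : ℝ) + ((d : ℝ) - 2) / 2)) *
      Y (n - 2 * j) ν

/-!
Put `ρ = ‖x‖²`. For `Y` harmonic and homogeneous of degree `k` and `b = k + (d - 2) / 2`, one has
`Δ(f(ρ) Y) = 4 (ρ f'' + (b + 1) f') Y`. Hence in polar coordinates `⟨q(ρ) Y, r(ρ) Z⟩_Δ` is the
integral of `Y Z` over the sphere times a weighted integral over `ρ ∈ [0, 1]`. The first factor
vanishes unless `Y = Z`, and then the weight is `ρ^b`, for which `f ↦ ρ f'' + (b + 1) f'` is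
symmetric up to boundary terms at `ρ = 1`. These are absent when
`f = (1 - ρ)² P_{j-1}^{(2,b)}(2ρ - 1)`, so what remains is the orthogonality of `P_{j-1}^{(2,b)}` to
polynomials of lower degree.
-/

section WeightedDeriv

open scoped Polynomial
open Polynomial (derivative)
open Finset.HasAntidiagonal (antidiagonal mem_antidiagonal)

variable {R : Type*} [CommRing R]

/-- The operator `f ↦ ρ f' + c f`, which is `f ↦ ρ^(1-c) (ρ^c f)'` written without the power
`ρ^c`: it expresses differentiation of `ρ^c f` as an operator on the polynomial factor. -/
def weightedDeriv (c : R) : R[X] →ₗ[R] R[X] :=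
  LinearMap.mulLeft R Polynomial.X ∘ₗ derivative + c • LinearMap.id

/-- The polynomial factor of an iterated derivative of `ρ^B f`:
`dⁿ/dρⁿ (ρ^B f) = ρ^(B-n) * iterWeightedDeriv B f n`. -/
def iterWeightedDeriv (B : R) (f : R[X]) : ℕ → R[X]
  | 0 => f
  | n + 1 => weightedDeriv (B - n) (iterWeightedDeriv B f n)

lemma weightedDeriv_apply (c : R) (f : R[X]) :
    weightedDeriv c f = Polynomial.X * derivative f + Polynomial.C c * f := by
  simp [weightedDeriv, Polynomial.smul_eq_C_mul]

lemma weightedDeriv_mul (c : R) (f g : R[X]) :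
    weightedDeriv c (f * g) = weightedDeriv c f * g + Polynomial.X * (f * derivative g) := by
  simp only [weightedDeriv_apply, Polynomial.derivative_mul]
  ring

lemma derivative_weightedDeriv (c : R) (f : R[X]) :
    derivative (weightedDeriv c f) = weightedDeriv (c + 1) (derivative f) := by
  simp only [weightedDeriv_apply, Polynomial.derivative_mul,
    Polynomial.derivative_X, Polynomial.derivative_C, map_add, map_one]
  ring

lemma iterate_derivative_weightedDeriv (c : R) (f : R[X]) (n : ℕ) :
    derivative^[n] (weightedDeriv c f) = weightedDeriv (c + n) (derivative^[n] f) := by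
  induction n with
  | zero => simp
  | succ n ih =>
    rw [Function.iterate_succ_apply', ih, derivative_weightedDeriv,
      ← Function.iterate_succ_apply' derivative, Nat.cast_succ, add_assoc]

lemma pow_dvd_weightedDeriv {p f : R[X]} {n : ℕ} (c : R) (h : p ^ (n + 1) ∣ f) :
    p ^ n ∣ weightedDeriv c f := by
  rw [weightedDeriv_apply]
  exact ((Polynomial.pow_sub_one_dvd_derivative_of_pow_dvd h).mul_left _).add
    (((pow_dvd_pow p n.le_succ).trans h).mul_left _)

lemma pow_dvd_iterWeightedDeriv {p f : R[X]} {m : ℕ} (B : R) (n : ℕ) (h : p ^ (m + n) ∣ f) :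
    p ^ m ∣ iterWeightedDeriv B f n := by
  induction n generalizing m with
  | zero => exact h
  | succ n ih => exact pow_dvd_weightedDeriv _ (ih (by rwa [add_right_comm]))

lemma weightedDeriv_X_pow_mul_iterate_derivative (c : R) (f : R[X]) (j : ℕ) :
    weightedDeriv c (Polynomial.X ^ j * derivative^[j] f) =
      (c + j) • (Polynomial.X ^ j * derivative^[j] f) +
        Polynomial.X ^ (j + 1) * derivative^[j + 1] f := by
  have hX : Polynomial.X * derivative (Polynomial.X ^ j : R[X]) =
      (j : R[X]) * Polynomial.X ^ j := by
    cases j with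
    | zero => simp
    | succ j =>
      rw [Polynomial.derivative_X_pow, map_natCast, Nat.add_sub_cancel]
      ring
  rw [weightedDeriv_apply, Polynomial.derivative_mul, Polynomial.smul_eq_C_mul,
    Function.iterate_succ_apply', map_add, map_natCast, pow_succ]
  linear_combination derivative^[j] f * hX

lemma iterWeightedDeriv_eq_sum (B : R) (f : R[X]) (n : ℕ) :
    iterWeightedDeriv B f n = ∑ ij ∈ antidiagonal n,
      n.choose ij.1 • ((descPochhammer R ij.1).eval B •
        (Polynomial.X ^ ij.2 * derivative^[ij.2] f)) := by
  induction n with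
  | zero => simp [iterWeightedDeriv]
  | succ n ih =>
    rw [iterWeightedDeriv, ih, map_sum, Finset.sum_antidiagonal_choose_succ_nsmul
      (fun i j ↦ (descPochhammer R i).eval B • (Polynomial.X ^ j * derivative^[j] f)),
      ← Finset.sum_add_distrib]
    refine Finset.sum_congr rfl fun ⟨i, j⟩ hij ↦ ?_
    obtain rfl : i + j = n := mem_antidiagonal.mp hij
    rw [Nat.choose_symm_add, map_nsmul, map_smul, weightedDeriv_X_pow_mul_iterate_derivative,
      descPochhammer_succ_eval, Nat.cast_add]
    module

end WeightedDeriv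

section WeightedIntegral

open scoped Polynomial
open Polynomial (derivative)

/-- The functional `p ↦ ∫₀¹ ρ^b p(ρ) dρ` on polynomials, given for `b > -1` by its values
`1 / (b + i + 1)` on the monomials `ρ^i`. -/
def weightedIntegral (b : ℝ) : ℝ[X] →ₗ[ℝ] ℝ :=
  Polynomial.lsum fun i ↦ (b + i + 1)⁻¹ • LinearMap.id

lemma weightedIntegral_monomial (b : ℝ) (i : ℕ) (a : ℝ) :
    weightedIntegral b (Polynomial.monomial i a) = a / (b + i + 1) := by
  simp [weightedIntegral, Polynomial.lsum_apply, div_eq_inv_mul]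

lemma weightedIntegral_X_mul (b : ℝ) (f : ℝ[X]) :
    weightedIntegral b (Polynomial.X * f) = weightedIntegral (b + 1) f := by
  induction f using Polynomial.induction_on' with
  | add p q hp hq => rw [mul_add, map_add, map_add, hp, hq]
  | monomial i a =>
    rw [Polynomial.X_mul_monomial, weightedIntegral_monomial, weightedIntegral_monomial]
    push_cast
    ring_nf

lemma weightedIntegral_weightedDeriv {b : ℝ} (hb : -1 < b) (f : ℝ[X]) :
    weightedIntegral b (weightedDeriv (b + 1) f) = f.eval 1 := by
  induction f using Polynomial.induction_on' with
  | add p q hp hq => rw [map_add, map_add, hp, hq, Polynomial.eval_add]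
  | monomial i a =>
    have hderiv : weightedDeriv (b + 1) (Polynomial.monomial i a) =
        Polynomial.monomial i ((b + i + 1) * a) := by
      rw [weightedDeriv_apply, Polynomial.C_mul_monomial]
      cases i with
      | zero => simp
      | succ i =>
        rw [Polynomial.derivative_monomial, Polynomial.X_mul_monomial, Nat.add_sub_cancel,
          ← map_add]
        push_cast
        ring_nf
    have hne : b + i + 1 ≠ 0 := by linarith [(Nat.cast_nonneg i : (0 : ℝ) ≤ i)]
    rw [hderiv, weightedIntegral_monomial, mul_div_cancel_left₀ a hne]
    simp

lemma weightedIntegral_weightedDeriv_mul {b : ℝ} (hb : -1 < b) (f g : ℝ[X]) :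
    weightedIntegral b (weightedDeriv (b + 1) f * g) =
      f.eval 1 * g.eval 1 - weightedIntegral (b + 1) (f * derivative g) := by
  rw [← Polynomial.eval_mul, ← weightedIntegral_weightedDeriv hb, weightedDeriv_mul, map_add,
    weightedIntegral_X_mul, add_sub_cancel_right]

-- Each integration by parts moves one derivative from `ρ^(b+n) f` to `q`.
lemma weightedIntegral_iterWeightedDeriv_mul_eq_zero {b : ℝ} (hb : -1 < b) {f q : ℝ[X]} {n : ℕ}
    (hf : (Polynomial.X - Polynomial.C 1) ^ n ∣ f) (hq : derivative^[n] q = 0) :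
    weightedIntegral b (iterWeightedDeriv (b + n) f n * q) = 0 := by
  induction n generalizing b q with
  | zero =>
    obtain rfl : q = 0 := hq
    simp
  | succ n ih =>
    have hboundary : (iterWeightedDeriv (b + 1 + n) f n).eval 1 = 0 := by
      refine Polynomial.dvd_iff_isRoot.mp ?_
      simpa only [pow_one] using pow_dvd_iterWeightedDeriv (m := 1) _ n (by rwa [add_comm 1 n])
    have hinterior := ih (b := b + 1) (by linarith) (dvd_trans (pow_dvd_pow _ n.le_succ) hf)
      (q := derivative q) hq
    rw [show b + (n + 1 : ℕ) = b + 1 + n by push_cast; ring, iterWeightedDeriv,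
      add_sub_cancel_right, weightedIntegral_weightedDeriv_mul hb, hboundary, hinterior]
    simp

lemma intervalIntegral_pow_mul_eval_sq (m : ℕ) (p : ℝ[X]) :
    ∫ r in (0 : ℝ)..1, r ^ m * p.eval (r ^ 2) =
      2⁻¹ * weightedIntegral (((m : ℝ) - 1) / 2) p := by
  induction p using Polynomial.induction_on' with
  | add p q hp hq =>
    simp only [Polynomial.eval_add, mul_add, map_add]
    rw [intervalIntegral.integral_add (Continuous.intervalIntegrable (by fun_prop) _ _)
      (Continuous.intervalIntegrable (by fun_prop) _ _), hp, hq]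
  | monomial i a =>
    have hintegrand : ∀ r : ℝ, r ^ m * (Polynomial.monomial i a).eval (r ^ 2) =
        a * r ^ (m + 2 * i) := fun r ↦ by
      rw [Polynomial.eval_monomial]
      ring
    have hm : (m : ℝ) + 2 * i + 1 ≠ 0 := by positivity
    have hhalf : ((m : ℝ) - 1) / 2 + i + 1 = (m + 2 * i + 1) / 2 := by ring
    simp only [hintegrand, intervalIntegral.integral_const_mul, integral_pow,
      weightedIntegral_monomial, hhalf]
    push_cast
    field_simp
    simp

end WeightedIntegral

section Jacobi

open scoped Polynomial
open Polynomial (derivative)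
open Finset.HasAntidiagonal (antidiagonal mem_antidiagonal)

lemma factorial_mul_genBinom (z : ℝ) (k : ℕ) :
    (k.factorial : ℝ) * genBinom z k = (descPochhammer ℝ k).eval z := by
  rw [genBinom, descPochhammer_eval_eq_prod_range]
  exact mul_div_cancel₀ _ (Nat.cast_ne_zero.mpr k.factorial_ne_zero)

lemma jacobiPoly_comp_two_mul_X_sub_one (n : ℕ) (a b : ℝ) :
    (jacobiPoly n a b).comp (2 * Polynomial.X - 1) = ∑ ij ∈ antidiagonal n,
      Polynomial.C (genBinom (n + a) ij.2 * genBinom (n + b) ij.1) *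
        (Polynomial.X - Polynomial.C 1) ^ ij.1 * Polynomial.X ^ ij.2 := by
  have htwo : Polynomial.C (2⁻¹ : ℝ) * 2 = 1 := by
    rw [← Polynomial.C_ofNat, ← map_mul]
    norm_num
  have hsub : Polynomial.C (2⁻¹ : ℝ) * (2 * Polynomial.X - 1 - 1) =
      Polynomial.X - Polynomial.C 1 := by
    rw [map_one]
    linear_combination (Polynomial.X - 1) * htwo
  have hadd : Polynomial.C (2⁻¹ : ℝ) * (2 * Polynomial.X - 1 + 1) = Polynomial.X := by
    linear_combination Polynomial.X * htwo
  simp only [Finset.Nat.sum_antidiagonal_eq_sum_range_succ_mk, jacobiPoly, Polynomial.sum_comp,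
    Polynomial.mul_comp, Polynomial.pow_comp, Polynomial.sub_comp, Polynomial.add_comp,
    Polynomial.C_comp, Polynomial.X_comp, Polynomial.one_comp, hsub, hadd]

lemma natDegree_jacobiPoly_comp_le (n : ℕ) (a b : ℝ) :
    ((jacobiPoly n a b).comp (2 * Polynomial.X - 1)).natDegree ≤ n := by
  rw [jacobiPoly_comp_two_mul_X_sub_one]
  refine Polynomial.natDegree_sum_le_of_forall_le _ _ fun ⟨i, j⟩ hij ↦ ?_
  obtain rfl : i + j = n := mem_antidiagonal.mp hij
  compute_degree

-- Rodrigues' formula `n! (ρ - 1)^a ρ^b P_n^{(a,b)}(2ρ - 1) = dⁿ/dρⁿ (ρ^(n+b) (ρ - 1)^(n+a))`, with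
-- the common factor `ρ^b` cancelled.
lemma jacobiPoly_comp_rodrigues (n a : ℕ) (b : ℝ) :
    Polynomial.C (n.factorial : ℝ) * ((Polynomial.X - Polynomial.C 1) ^ a *
        (jacobiPoly n a b).comp (2 * Polynomial.X - 1)) =
      iterWeightedDeriv (n + b) ((Polynomial.X - Polynomial.C 1) ^ (n + a)) n := by
  rw [iterWeightedDeriv_eq_sum, jacobiPoly_comp_two_mul_X_sub_one, Finset.mul_sum, Finset.mul_sum]
  refine Finset.sum_congr rfl fun ⟨i, j⟩ hij ↦ ?_
  obtain rfl : i + j = n := mem_antidiagonal.mp hij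
  have hcoeff : ((i + j).factorial : ℝ) *
      (genBinom ((i + j : ℕ) + a) j * genBinom ((i + j : ℕ) + b) i) =
      (i + j).choose i * ((descPochhammer ℝ i).eval ((i + j : ℕ) + b) *
        (i + j + a).descFactorial j) := by
    rw [← descPochhammer_eval_eq_descFactorial, ← factorial_mul_genBinom,
      ← factorial_mul_genBinom, ← Nat.add_choose_mul_factorial_mul_factorial i j,
      Nat.choose_symm_add]
    push_cast
    ring
  rw [Polynomial.iterate_derivative_X_sub_pow, show i + j + a - j = i + a by omega]
  simp only [nsmul_eq_mul, Polynomial.smul_eq_C_mul, ← Polynomial.C_eq_natCast]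
  have hcoeff' := congrArg (Polynomial.C : ℝ → ℝ[X]) hcoeff
  simp only [map_mul] at hcoeff' ⊢
  linear_combination
    ((Polynomial.X - Polynomial.C 1) ^ (i + a) * Polynomial.X ^ j) * hcoeff'

lemma weightedIntegral_jacobiPoly_comp_mul_eq_zero (n a : ℕ) {b : ℝ} (hb : -1 < b) {q : ℝ[X]}
    (hq : derivative^[n] q = 0) :
    weightedIntegral b ((Polynomial.X - Polynomial.C 1) ^ a *
      (jacobiPoly n a b).comp (2 * Polynomial.X - 1) * q) = 0 := by
  have h := weightedIntegral_iterWeightedDeriv_mul_eq_zero hb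
    (pow_dvd_pow (Polynomial.X - Polynomial.C 1) (n.le_add_right a)) hq
  rw [add_comm b, ← jacobiPoly_comp_rodrigues, mul_assoc, ← Polynomial.smul_eq_C_mul,
    map_smul, smul_eq_mul] at h
  exact (mul_eq_zero.mp h).resolve_left (Nat.cast_ne_zero.mpr n.factorial_ne_zero)

end Jacobi

section Radial

open scoped Polynomial
open Polynomial (derivative)

/-- The operator `f ↦ ρ f'' + (b + 1) f'`: a quarter of the Laplacian acting on the radial factor
of `f(‖x‖²) Z(x)`, for `Z` harmonic and homogeneous of degree `k` and `b = k + (d - 2) / 2`. -/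
def radialLaplacian (b : ℝ) (f : ℝ[X]) : ℝ[X] :=
  weightedDeriv (b + 1) (derivative f)

/-- The radial factor of `Q_{j,ν}^n(x) = q(‖x‖²) Y_ν^{n-2j}(x)`, as a polynomial `q` in `‖x‖²`;
here `b = n - 2j + (d - 2) / 2`. -/
def radialFactor (b : ℝ) (j : ℕ) : ℝ[X] :=
  if j = 0 then 1
  else (1 - Polynomial.X) * (jacobiPoly (j - 1) 2 b).comp (2 * Polynomial.X - 1)

lemma one_sub_X_mul_radialFactor_succ (b : ℝ) (n : ℕ) :
    (1 - Polynomial.X) * radialFactor b (n + 1) =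
      (Polynomial.X - Polynomial.C 1) ^ 2 *
        (jacobiPoly n 2 b).comp (2 * Polynomial.X - 1) := by
  rw [radialFactor, if_neg n.succ_ne_zero, Nat.add_sub_cancel, map_one]
  ring

lemma natDegree_one_sub_X_mul_radialFactor_le (b : ℝ) (j : ℕ) :
    ((1 - Polynomial.X) * radialFactor b j).natDegree ≤ j + 1 := by
  cases j with
  | zero =>
    rw [radialFactor, if_pos rfl]
    compute_degree
  | succ n =>
    rw [one_sub_X_mul_radialFactor_succ]
    have hsq : ((Polynomial.X - Polynomial.C 1 : ℝ[X]) ^ 2).natDegree ≤ 2 := by compute_degree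
    exact (Polynomial.natDegree_mul_le_of_le hsq (natDegree_jacobiPoly_comp_le n 2 b)).trans
      (by omega)

lemma iterate_derivative_radialLaplacian_eq_zero (b : ℝ) {f : ℝ[X]} {n : ℕ}
    (hf : derivative^[n + 1] f = 0) : derivative^[n] (radialLaplacian b f) = 0 := by
  rw [radialLaplacian, iterate_derivative_weightedDeriv, ← Function.iterate_succ_apply, hf,
    map_zero]

lemma weightedIntegral_radialLaplacian_mul_comm {b : ℝ} (hb : -1 < b) {f : ℝ[X]} (g : ℝ[X])
    (hf : f.eval 1 = 0) (hf' : (derivative f).eval 1 = 0) :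
    weightedIntegral b (radialLaplacian b f * g) =
      weightedIntegral b (f * radialLaplacian b g) := by
  rw [mul_comm f, radialLaplacian, radialLaplacian, weightedIntegral_weightedDeriv_mul hb,
    weightedIntegral_weightedDeriv_mul hb, hf, hf', mul_comm (derivative f)]
  ring

-- Since `(1 - ρ) q_j` vanishes to second order at `ρ = 1` when `j > 0`, its Laplacian can be moved
-- to the other factor, which then has degree `< j - 1`, and Jacobi orthogonality applies.
lemma weightedIntegral_radialLaplacian_mul_eq_zero_of_lt {b : ℝ} (hb : -1 < b) {j l : ℕ}
    (hlj : l < j) :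
    weightedIntegral b (radialLaplacian b ((1 - Polynomial.X) * radialFactor b j) *
      radialLaplacian b ((1 - Polynomial.X) * radialFactor b l)) = 0 := by
  obtain ⟨n, rfl⟩ := Nat.exists_eq_add_one_of_ne_zero (Nat.ne_zero_of_lt hlj)
  have hdeg : derivative^[n] (radialLaplacian b
      (radialLaplacian b ((1 - Polynomial.X) * radialFactor b l))) = 0 :=
    iterate_derivative_radialLaplacian_eq_zero b <|
      iterate_derivative_radialLaplacian_eq_zero b <| Polynomial.iterate_derivative_eq_zero <|
        (natDegree_one_sub_X_mul_radialFactor_le b l).trans_lt (by omega)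
  rw [one_sub_X_mul_radialFactor_succ, weightedIntegral_radialLaplacian_mul_comm hb _ (by simp)
    (by simp [Polynomial.derivative_pow])]
  exact_mod_cast weightedIntegral_jacobiPoly_comp_mul_eq_zero n 2 hb hdeg

lemma weightedIntegral_radialLaplacian_mul_eq_zero_of_ne {b : ℝ} (hb : -1 < b) {j l : ℕ}
    (hjl : j ≠ l) :
    weightedIntegral b (radialLaplacian b ((1 - Polynomial.X) * radialFactor b j) *
      radialLaplacian b ((1 - Polynomial.X) * radialFactor b l)) = 0 := by
  rcases hjl.lt_or_gt with h | h
  · rw [mul_comm]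
    exact weightedIntegral_radialLaplacian_mul_eq_zero_of_lt hb h
  · exact weightedIntegral_radialLaplacian_mul_eq_zero_of_lt hb h

end Radial

section Laplacian

open scoped Polynomial
open Polynomial (derivative)

variable {d : ℕ}

lemma mvLaplacian_mul (p q : MvPolynomial (Fin d) ℝ) :
    mvLaplacian (p * q) =
      mvLaplacian p * q + 2 * ∑ i, pderiv i p * pderiv i q + p * mvLaplacian q := by
  simp only [mvLaplacian, Finset.mul_sum, Finset.sum_mul, ← Finset.sum_add_distrib]
  refine Finset.sum_congr rfl fun i _ ↦ ?_
  simp only [pderiv_mul, map_add]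
  ring

lemma pderiv_sumSq (i : Fin d) : pderiv i (sumSq d) = 2 * X i := by
  simp [sumSq, pderiv_X, Pi.single_apply]

lemma pderiv_aeval_sumSq (i : Fin d) (f : ℝ[X]) :
    pderiv i (Polynomial.aeval (sumSq d) f) =
      2 * X i * Polynomial.aeval (sumSq d) (derivative f) := by
  rw [Derivation.map_aeval, pderiv_sumSq, smul_eq_mul, mul_comm]

lemma mvLaplacian_aeval_sumSq (f : ℝ[X]) :
    mvLaplacian (Polynomial.aeval (sumSq d) f) =
      4 * sumSq d * Polynomial.aeval (sumSq d) (derivative (derivative f)) +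
        2 * (d : MvPolynomial (Fin d) ℝ) * Polynomial.aeval (sumSq d) (derivative f) := by
  have hterm (i : Fin d) : pderiv i (pderiv i (Polynomial.aeval (sumSq d) f)) =
      4 * Polynomial.aeval (sumSq d) (derivative (derivative f)) * X i ^ 2 +
        2 * Polynomial.aeval (sumSq d) (derivative f) := by
    have htwo : pderiv i (2 : MvPolynomial (Fin d) ℝ) = 0 := (pderiv i).map_natCast 2
    simp only [pderiv_aeval_sumSq, pderiv_mul, pderiv_X_self, htwo]
    ring
  simp only [mvLaplacian, hterm, Finset.sum_add_distrib, ← Finset.mul_sum, Finset.sum_const,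
    Finset.card_univ, Fintype.card_fin, nsmul_eq_mul]
  rw [← sumSq]
  ring

lemma mvLaplacian_aeval_sumSq_mul (f : ℝ[X]) {k : ℕ} {Z : MvPolynomial (Fin d) ℝ}
    (hZ : Z.IsHomogeneous k) (hZharm : mvLaplacian Z = 0) :
    mvLaplacian (Polynomial.aeval (sumSq d) f * Z) =
      Polynomial.aeval (sumSq d) (4 * radialLaplacian (k + ((d : ℝ) - 2) / 2) f) * Z := by
  have hcross : ∑ i, pderiv i (Polynomial.aeval (sumSq d) f) * pderiv i Z =
      2 * Polynomial.aeval (sumSq d) (derivative f) * ((k : MvPolynomial (Fin d) ℝ) * Z) := by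
    rw [← nsmul_eq_mul k Z, ← hZ.sum_X_mul_pderiv, Finset.mul_sum]
    refine Finset.sum_congr rfl fun i _ ↦ ?_
    rw [pderiv_aeval_sumSq]
    ring
  have hcoeff : 4 * (C (k + ((d : ℝ) - 2) / 2 + 1) : MvPolynomial (Fin d) ℝ) =
      4 * (k : MvPolynomial (Fin d) ℝ) + 2 * (d : MvPolynomial (Fin d) ℝ) := by
    simp only [← map_natCast (C : ℝ →+* MvPolynomial (Fin d) ℝ),
      ← map_ofNat (C : ℝ →+* MvPolynomial (Fin d) ℝ), ← map_mul, ← map_add]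
    congr 1
    ring
  rw [mvLaplacian_mul, mvLaplacian_aeval_sumSq, hcross, hZharm, radialLaplacian,
    weightedDeriv_apply]
  simp only [map_mul, map_add, map_ofNat, Polynomial.aeval_X, Polynomial.aeval_C,
    algebraMap_eq] at hcoeff ⊢
  linear_combination (-(Polynomial.aeval (sumSq d) (derivative f) * Z)) * hcoeff

lemma Qpoly_eq_aeval_radialFactor_mul
    (Y : (m : ℕ) → Fin (sigmaDim d m) → MvPolynomial (Fin d) ℝ) {n j : ℕ} (hjn : 2 * j ≤ n)
    (ν : Fin (sigmaDim d (n - 2 * j))) :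
    Qpoly d Y n j ν = Polynomial.aeval (sumSq d)
      (radialFactor ((n - 2 * j : ℕ) + ((d : ℝ) - 2) / 2) j) * Y (n - 2 * j) ν := by
  unfold Qpoly radialFactor
  split_ifs
  · simp
  · simp [Polynomial.aeval_comp, Nat.cast_sub hjn, map_ofNat]

end Laplacian

section Polar

lemma integral_volumeIoiPow (n : ℕ) (f : ℝ → ℝ) :
    ∫ r : Set.Ioi (0 : ℝ), f r ∂(Measure.volumeIoiPow n) =
      ∫ r in Set.Ioi (0 : ℝ), r ^ n * f r := by
  simp only [Measure.volumeIoiPow, ENNReal.ofReal]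
  rw [integral_withDensity_eq_integral_smul (measurable_subtype_coe.pow_const _).real_toNNReal,
    integral_subtype_comap measurableSet_Ioi fun r : ℝ ↦ Real.toNNReal (r ^ n) • f r]
  refine setIntegral_congr_fun measurableSet_Ioi fun r hr ↦ ?_
  simp only [NNReal.smul_def, Real.coe_toNNReal _ (pow_nonneg (le_of_lt hr) n), smul_eq_mul]

variable {E : Type*} [NormedAddCommGroup E] [NormedSpace ℝ E] [FiniteDimensional ℝ E]
  [Nontrivial E] [MeasurableSpace E] [BorelSpace E] (μ : Measure E) [μ.IsAddHaarMeasure]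

lemma integral_norm_mul_of_homogeneous (g : ℝ → ℝ) {A : E → ℝ} {k : ℕ}
    (hA : ∀ (r : ℝ) (x : E), A (r • x) = r ^ k * A x) :
    ∫ x, g ‖x‖ * A x ∂μ = (∫ y : sphere (0 : E) 1, A y ∂μ.toSphere) *
      ∫ r in Set.Ioi (0 : ℝ), r ^ (Module.finrank ℝ E - 1) * (r ^ k * g r) := by
  have hpolar (x : ({0}ᶜ : Set E)) : A x = ‖(x : E)‖ ^ k * A (‖(x : E)‖⁻¹ • (x : E)) := by
    rw [← hA, smul_inv_smul₀ (norm_ne_zero_iff.mpr x.2)]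
  calc ∫ x, g ‖x‖ * A x ∂μ
      = ∫ x : ({0}ᶜ : Set E), g ‖(x : E)‖ * A x ∂(μ.comap (↑)) := by
        rw [integral_subtype_comap (measurableSet_singleton _).compl fun x ↦ g ‖x‖ * A x,
          restrict_compl_singleton]
    _ = ∫ z, A (z.1 : E) * ((z.2 : ℝ) ^ k * g z.2)
          ∂(μ.toSphere.prod (.volumeIoiPow (Module.finrank ℝ E - 1))) := by
        rw [← μ.measurePreserving_homeomorphUnitSphereProd.integral_comp
          (Homeomorph.measurableEmbedding _)]
        refine integral_congr_ae (.of_forall fun x ↦ ?_)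
        simp only [hpolar x, homeomorphUnitSphereProd_apply_fst_coe,
          homeomorphUnitSphereProd_apply_snd_coe]
        ring
    _ = _ := by
        rw [integral_prod_mul (fun y : sphere (0 : E) 1 ↦ A y)
          (fun r : Set.Ioi (0 : ℝ) ↦ (r : ℝ) ^ k * g r),
          integral_volumeIoiPow _ fun r ↦ r ^ k * g r]

lemma setIntegral_closedBall_norm_mul_of_homogeneous (g : ℝ → ℝ) {A : E → ℝ} {k : ℕ}
    (hA : ∀ (r : ℝ) (x : E), A (r • x) = r ^ k * A x) :
    ∫ x in closedBall (0 : E) 1, g ‖x‖ * A x ∂μ =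
      (∫ y : sphere (0 : E) 1, A y ∂μ.toSphere) *
        ∫ r in (0 : ℝ)..1, r ^ (Module.finrank ℝ E - 1 + k) * g r := by
  have hball : ∫ x in closedBall (0 : E) 1, g ‖x‖ * A x ∂μ =
      ∫ x, (Set.Iic (1 : ℝ)).indicator g ‖x‖ * A x ∂μ := by
    rw [← integral_indicator measurableSet_closedBall]
    congr 1 with x
    by_cases hx : ‖x‖ ≤ 1 <;> simp [Set.indicator, hx]
  rw [hball, integral_norm_mul_of_homogeneous μ _ hA,
    intervalIntegral.integral_of_le zero_le_one, ← Set.Ioi_inter_Iic, Set.inter_comm,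
    ← Measure.restrict_restrict measurableSet_Iic, ← integral_indicator measurableSet_Iic]
  congr 2 with r
  by_cases hr : r ∈ Set.Iic (1 : ℝ) <;> simp [hr, pow_add, mul_assoc]

end Polar

section InnerDelta

open scoped Polynomial

variable {d : ℕ}

lemma pEval_mul (p q : MvPolynomial (Fin d) ℝ) (x : Edim d) :
    pEval (p * q) x = pEval p x * pEval q x :=
  map_mul _ p q

lemma pEval_smul {k : ℕ} {Z : MvPolynomial (Fin d) ℝ} (hZ : Z.IsHomogeneous k) (r : ℝ)
    (x : Edim d) : pEval Z (r • x) = r ^ k * pEval Z x := by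
  simp only [pEval, eval_eq, Finset.mul_sum]
  refine Finset.sum_congr rfl fun s hs ↦ ?_
  have hdeg : ∑ i ∈ s.support, s i = k := by
    simpa [Finsupp.weight_apply, Finsupp.sum] using hZ (mem_support_iff.mp hs)
  simp only [PiLp.smul_apply, smul_eq_mul, mul_pow, Finset.prod_mul_distrib,
    Finset.prod_pow_eq_pow_sum, hdeg]
  ring

lemma pEval_aeval_sumSq_mul (f : ℝ[X]) (Z : MvPolynomial (Fin d) ℝ) (x : Edim d) :
    pEval (Polynomial.aeval (sumSq d) f * Z) x = f.eval (‖x‖ ^ 2) * pEval Z x := by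
  have hnorm : aeval (fun i ↦ x i) (sumSq d) = ‖x‖ ^ 2 := by
    simp [sumSq, EuclideanSpace.norm_sq_eq]
  rw [pEval, pEval, map_mul, ← coe_aeval_eq_eval, RingHom.coe_coe,
    ← Polynomial.aeval_algHom_apply, hnorm, Polynomial.coe_aeval_eq_eval]

lemma setIntegral_closedBall_aeval_sumSq_mul [NeZero d] (f : ℝ[X]) {k : ℕ}
    {Z : MvPolynomial (Fin d) ℝ} (hZ : Z.IsHomogeneous k) :
    ∫ x in closedBall (0 : Edim d) 1, pEval (Polynomial.aeval (sumSq d) f * Z) x =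
      2⁻¹ * (∫ y : sphere (0 : Edim d) 1, pEval Z y ∂(sphMeasure d)) *
        weightedIntegral ((k : ℝ) / 2 + ((d : ℝ) - 2) / 2) f := by
  have hexp : (((d - 1 + k : ℕ) : ℝ) - 1) / 2 = (k : ℝ) / 2 + ((d : ℝ) - 2) / 2 := by
    rw [Nat.cast_add, Nat.cast_pred (NeZero.pos d)]
    ring
  simp only [pEval_aeval_sumSq_mul]
  rw [setIntegral_closedBall_norm_mul_of_homogeneous volume (fun r ↦ f.eval (r ^ 2))
    (pEval_smul hZ), finrank_euclideanSpace_fin, intervalIntegral_pow_mul_eval_sq, hexp, sphMeasure]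
  ring

lemma mvLaplacian_one_sub_sumSq_mul (f : ℝ[X]) {k : ℕ} {Z : MvPolynomial (Fin d) ℝ}
    (hZ : Z.IsHomogeneous k) (hZharm : mvLaplacian Z = 0) :
    mvLaplacian ((1 - sumSq d) * (Polynomial.aeval (sumSq d) f * Z)) =
      Polynomial.aeval (sumSq d)
        (4 * radialLaplacian (k + ((d : ℝ) - 2) / 2) ((1 - Polynomial.X) * f)) * Z := by
  rw [← mvLaplacian_aeval_sumSq_mul _ hZ hZharm]
  simp only [map_mul, map_sub, map_one, Polynomial.aeval_X, mul_assoc]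

lemma innerDelta_aeval_sumSq_mul [NeZero d] (f g : ℝ[X]) {k m : ℕ}
    {Z W : MvPolynomial (Fin d) ℝ} (hZ : Z.IsHomogeneous k) (hZharm : mvLaplacian Z = 0)
    (hW : W.IsHomogeneous m) (hWharm : mvLaplacian W = 0) :
    innerDelta d (Polynomial.aeval (sumSq d) f * Z) (Polynomial.aeval (sumSq d) g * W) =
      8 / Real.pi * (∫ y : sphere (0 : Edim d) 1, pEval Z y * pEval W y ∂(sphMeasure d)) *
        weightedIntegral (((k : ℝ) + m) / 2 + ((d : ℝ) - 2) / 2)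
          (radialLaplacian (k + ((d : ℝ) - 2) / 2) ((1 - Polynomial.X) * f) *
            radialLaplacian (m + ((d : ℝ) - 2) / 2) ((1 - Polynomial.X) * g)) := by
  rw [innerDelta, mvLaplacian_one_sub_sumSq_mul f hZ hZharm,
    mvLaplacian_one_sub_sumSq_mul g hW hWharm]
  set p := radialLaplacian (k + ((d : ℝ) - 2) / 2) ((1 - Polynomial.X) * f)
  set q := radialLaplacian (m + ((d : ℝ) - 2) / 2) ((1 - Polynomial.X) * g)
  have hprod : Polynomial.aeval (sumSq d) (4 * p) * Z * (Polynomial.aeval (sumSq d) (4 * q) * W) =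
      Polynomial.aeval (sumSq d) ((16 : ℝ) • (p * q)) * (Z * W) := by
    simp only [map_mul, map_smul, map_ofNat, smul_eq_C_mul]
    ring
  simp only [← pEval_mul, hprod]
  rw [setIntegral_closedBall_aeval_sumSq_mul _ (hZ.mul hW), Nat.cast_add, map_smul, smul_eq_mul]
  ring

end InnerDelta

lemma omegaD_pos {d : ℕ} (hd : 0 < d) : 0 < omegaD d := by
  have := Real.Gamma_pos_of_pos (show 0 < (d : ℝ) / 2 by positivity)
  unfold omegaD
  positivity

lemma innerDelta_aeval_radialFactor_mul_eq_zero {d : ℕ} [NeZero d] {k m : ℕ} (j l : ℕ)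
    {Z W : MvPolynomial (Fin d) ℝ}
    (hZ : Z.IsHomogeneous k) (hZharm : mvLaplacian Z = 0)
    (hW : W.IsHomogeneous m) (hWharm : mvLaplacian W = 0)
    (h : k = m ∧ j ≠ l ∨
      ∫ y : sphere (0 : Edim d) 1, pEval Z y * pEval W y ∂(sphMeasure d) = 0) :
    innerDelta d
      (Polynomial.aeval (sumSq d) (radialFactor (k + ((d : ℝ) - 2) / 2) j) * Z)
      (Polynomial.aeval (sumSq d) (radialFactor (m + ((d : ℝ) - 2) / 2) l) * W) = 0 := by
  rw [innerDelta_aeval_sumSq_mul _ _ hZ hZharm hW hWharm]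
  rcases h with ⟨rfl, hjl⟩ | h
  · have hd : (1 : ℝ) ≤ d := Nat.one_le_cast.mpr (NeZero.pos d)
    have hb : -1 < (k : ℝ) + ((d : ℝ) - 2) / 2 := by
      linarith [(Nat.cast_nonneg k : (0 : ℝ) ≤ k)]
    rw [add_self_div_two, weightedIntegral_radialLaplacian_mul_eq_zero_of_ne hb hjl, mul_zero]
  · rw [h, mul_zero, zero_mul]

theorem stmt19_general {d : ℕ} [NeZero d]
    (Y : (m : ℕ) → Fin (sigmaDim d m) → MvPolynomial (Fin d) ℝ)
    (hYhom : ∀ m ν, (Y m ν).IsHomogeneous m)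
    (hYharm : ∀ m ν, mvLaplacian (Y m ν) = 0)
    (hYorth : ∀ (m k : ℕ) (ν : Fin (sigmaDim d m)) (μ : Fin (sigmaDim d k)),
      ¬(m = k ∧ (ν : ℕ) = (μ : ℕ)) →
        ∫ y : sphere (0 : Edim d) 1, pEval (Y m ν) y * pEval (Y k μ) y ∂(sphMeasure d) = 0)
    {n j : ℕ} (hjn : 2 * j ≤ n) (ν : Fin (sigmaDim d (n - 2 * j)))
    {m l : ℕ} (hlm : 2 * l ≤ m) (μ : Fin (sigmaDim d (m - 2 * l)))
    (hne : (n, j, (ν : ℕ)) ≠ (m, l, (μ : ℕ))) :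
    innerDelta d (Qpoly d Y n j ν) (Qpoly d Y m l μ) = 0 := by
  rw [Qpoly_eq_aeval_radialFactor_mul Y hjn, Qpoly_eq_aeval_radialFactor_mul Y hlm]
  refine innerDelta_aeval_radialFactor_mul_eq_zero j l
    (hYhom _ _) (hYharm _ _) (hYhom _ _) (hYharm _ _) ?_
  by_cases hidx : n - 2 * j = m - 2 * l ∧ (ν : ℕ) = (μ : ℕ)
  · refine .inl ⟨hidx.1, ?_⟩
    rintro rfl
    exact hne (by rw [hidx.2, show n = m by omega])
  · exact .inr (hYorth _ _ ν μ hidx)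

/-- Theorem 2.1 of [X06]: the polynomials `Q_{j,ν}^n` are mutually
orthogonal with respect to `⟨·,·⟩_Δ`. -/
theorem stmt19 (d : ℕ) (hd : 2 ≤ d)
    (Y : (m : ℕ) → Fin (sigmaDim d m) → MvPolynomial (Fin d) ℝ)
    (hYhom : ∀ m ν, (Y m ν).IsHomogeneous m)
    (hYharm : ∀ m ν, mvLaplacian (Y m ν) = 0)
    (hYon : ∀ (m k : ℕ) (ν : Fin (sigmaDim d m)) (μ : Fin (sigmaDim d k)),
      (1 / omegaD d) * ∫ y : sphere (0 : Edim d) 1,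
          pEval (Y m ν) y * pEval (Y k μ) y ∂(sphMeasure d) =
        if m = k ∧ (ν : ℕ) = (μ : ℕ) then 1 else 0)
    (n j : ℕ) (hjn : 2 * j ≤ n) (ν : Fin (sigmaDim d (n - 2 * j)))
    (m l : ℕ) (hlm : 2 * l ≤ m) (μ : Fin (sigmaDim d (m - 2 * l)))
    (hne : (n, j, (ν : ℕ)) ≠ (m, l, (μ : ℕ))) :
    innerDelta d (Qpoly d Y n j ν) (Qpoly d Y m l μ) = 0 := by
  have : NeZero d := ⟨by omega⟩
  refine stmt19_general Y hYhom hYharm (fun m k ν μ hidx ↦ ?_) hjn ν hlm μ hne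
  exact (mul_eq_zero.mp ((hYon m k ν μ).trans (if_neg hidx))).resolve_left
    (one_div_ne_zero (omegaD_pos (NeZero.pos d)).ne')
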